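/- If ⊑^r is a right-stable order and ⊑^l a left-stable order on F that commute (⊑^r ∘ ⊑^l = ⊑^l ∘ ⊑^r), then the order ⊑ = ⊑^r ∘ ⊑^l is stable: for all f : X → Z, g : Y → W, and R ⊆ Z × W, (Ff × Fg)⁻¹(Rel_⊑(F)(R)) ⊆ Rel_⊑(F)((f × g)⁻¹(R)). -/

import Mathlib

/-!
Composites of relations are written from left to right. Lifting a witness of `Rel(F)(R)` along one
of the two projections of `R` and pushing it forward along the other moves `⊑^r` rightwards and
`⊑^l` leftwards past `Rel(F)(R)`. With commutation and transitivity, `⊑^l ⊑^r Rel(F)(R) ⊑^l ⊑^r`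
thus shrinks to `⊑^l Rel(F)(R) ⊑^r`. In this form each remaining order has the stability needed to
lift it along `Ff`, respectively `Fg`, so only `Rel(F)(R)` itself has to be pulled back.
-/

/-- Relation lifting of a functor `F`, defined via spans. -/
def relLift (F : Type → Type) (Fmap : ∀ {X Y : Type}, (X → Y) → F X → F Y)
    {X Y : Type} (R : X → Y → Prop) (u : F X) (v : F Y) : Prop :=
  ∃ w : F {p : X × Y // R p.1 p.2},
    Fmap (fun p => p.1.1) w = u ∧ Fmap (fun p => p.1.2) w = v

section

variable {F : Type → Type} {Fmap : ∀ {X Y : Type}, (X → Y) → F X → F Y}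
  {ord ord₁ ord₂ ord₁' ord₂' ordl ordr : ∀ X : Type, F X → F X → Prop} {X Y : Type}

/-- Functoriality of an order `⊑` on `F`: every `Ff` is monotone. -/
def FunctorialOrder (Fmap : ∀ {X Y : Type}, (X → Y) → F X → F Y)
    (ord : ∀ X : Type, F X → F X → Prop) : Prop :=
  ∀ (X Y : Type) (f : X → Y) (u v : F X), ord X u v → ord Y (Fmap f u) (Fmap f v)

/-- Right-stability of an order on `F`: lower bounds of `Ff(v)` lift along `Ff` to lower bounds
of `v`. -/
def RightStable (Fmap : ∀ {X Y : Type}, (X → Y) → F X → F Y)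
    (ord : ∀ X : Type, F X → F X → Prop) : Prop :=
  ∀ (X Y : Type) (f : X → Y) (u : F Y) (v : F X),
    ord Y u (Fmap f v) → ∃ w : F X, Fmap f w = u ∧ ord X w v

/-- Left-stability of an order on `F`: upper bounds of `Ff(u)` lift along `Ff` to upper bounds
of `u`. -/
def LeftStable (Fmap : ∀ {X Y : Type}, (X → Y) → F X → F Y)
    (ord : ∀ X : Type, F X → F X → Prop) : Prop :=
  ∀ (X Y : Type) (f : X → Y) (u : F X) (v : F Y),
    ord Y (Fmap f u) v → ∃ w : F X, Fmap f w = v ∧ ord X u w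

/-- The inclusion `(Ff × Fg)⁻¹(Rel(F)(R)) ⊆ Rel(F)((f × g)⁻¹(R))`, which holds whenever `F`
preserves weak pullbacks. -/
def RelLiftPullback (Fmap : ∀ {X Y : Type}, (X → Y) → F X → F Y) : Prop :=
  ∀ (X Y Z W : Type) (f : X → Z) (g : Y → W) (R : Z → W → Prop) (u : F X) (v : F Y),
    relLift F @Fmap R (Fmap f u) (Fmap g v) → relLift F @Fmap (fun x y => R (f x) (g y)) u v

/-- The lifting of `R` with `ord₁` inserted before and `ord₂` after `Rel(F)(R)`. The lifting
`Rel_⊑(F)(R)` is the case where both orders are `⊑`; they are kept apart because for `⊑ = ⊑^r ∘ ⊑^l`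
only `⊑^l` is needed before and only `⊑^r` after `Rel(F)(R)`. -/
def orderedRelLift (Fmap : ∀ {X Y : Type}, (X → Y) → F X → F Y)
    (ord₁ ord₂ : ∀ X : Type, F X → F X → Prop) (R : X → Y → Prop) (u : F X) (v : F Y) : Prop :=
  ∃ (a : F X) (b : F Y), ord₁ X u a ∧ relLift F @Fmap R a b ∧ ord₂ Y b v

/-- The inclusion of `(Ff × Fg)⁻¹` of the ordered lifting of `R` in the ordered lifting of
`(f × g)⁻¹(R)`. An order `⊑` is stable when this holds with both orders equal to `⊑`. -/
def StablePair (Fmap : ∀ {X Y : Type}, (X → Y) → F X → F Y)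
    (ord₁ ord₂ : ∀ X : Type, F X → F X → Prop) : Prop :=
  ∀ (X Y Z W : Type) (f : X → Z) (g : Y → W) (R : Z → W → Prop) (u : F X) (v : F Y),
    orderedRelLift @Fmap ord₁ ord₂ R (Fmap f u) (Fmap g v) →
      orderedRelLift @Fmap ord₁ ord₂ (fun x y => R (f x) (g y)) u v

theorem orderedRelLift_mono (h₁ : ∀ X, ord₁ X ≤ ord₁' X) (h₂ : ∀ X, ord₂ X ≤ ord₂' X)
    (R : X → Y → Prop) :
    orderedRelLift @Fmap ord₁ ord₂ R ≤ orderedRelLift @Fmap ord₁' ord₂' R :=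
  fun _ _ ⟨a, b, hua, hab, hbv⟩ => ⟨a, b, h₁ _ _ _ hua, hab, h₂ _ _ _ hbv⟩

theorem RightStable.comp_relLift_le (hstable : RightStable @Fmap ord)
    (hmono : FunctorialOrder @Fmap ord) (R : X → Y → Prop) :
    Relation.Comp (ord X) (relLift F @Fmap R) ≤ Relation.Comp (relLift F @Fmap R) (ord Y) := by
  rintro u _ ⟨_, hu, c, rfl, rfl⟩
  obtain ⟨c', rfl, hc'⟩ := hstable _ _ _ _ _ hu
  exact ⟨_, ⟨c', rfl, rfl⟩, hmono _ _ _ _ _ hc'⟩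

theorem LeftStable.relLift_comp_le (hstable : LeftStable @Fmap ord)
    (hmono : FunctorialOrder @Fmap ord) (R : X → Y → Prop) :
    Relation.Comp (relLift F @Fmap R) (ord Y) ≤ Relation.Comp (ord X) (relLift F @Fmap R) := by
  rintro _ v ⟨_, ⟨c, rfl, rfl⟩, hv⟩
  obtain ⟨c', rfl, hc'⟩ := hstable _ _ _ _ _ hv
  exact ⟨_, hmono _ _ _ _ _ hc', c', rfl, rfl⟩

theorem orderedRelLift_comp_le [∀ X, IsTrans (F X) (ordr X)] [∀ X, IsTrans (F X) (ordl X)]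
    (hmonor : FunctorialOrder @Fmap ordr) (hmonol : FunctorialOrder @Fmap ordl)
    (hrs : RightStable @Fmap ordr) (hls : LeftStable @Fmap ordl)
    (hcomm : ∀ X, Relation.Comp (ordr X) (ordl X) ≤ Relation.Comp (ordl X) (ordr X))
    (R : X → Y → Prop) :
    orderedRelLift @Fmap (fun X => Relation.Comp (ordl X) (ordr X))
        (fun X => Relation.Comp (ordl X) (ordr X)) R ≤
      orderedRelLift @Fmap ordl ordr R := by
  rintro u v ⟨a, b, ⟨u', huu', hu'a⟩, hab, ⟨v', hbv', hv'v⟩⟩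
  obtain ⟨b₁, hu'b₁, hb₁b⟩ := hrs.comp_relLift_le hmonor R _ _ ⟨a, hu'a, hab⟩
  obtain ⟨b₂, hb₁b₂, hb₂v'⟩ := hcomm Y _ _ ⟨b, hb₁b, hbv'⟩
  obtain ⟨a₂, hu'a₂, ha₂b₂⟩ := hls.relLift_comp_le hmonol R _ _ ⟨b₁, hu'b₁, hb₁b₂⟩
  exact ⟨a₂, b₂, trans_of (ordl X) huu' hu'a₂, ha₂b₂, trans_of (ordr Y) hb₂v' hv'v⟩

theorem LeftStable.stablePair (hls : LeftStable @Fmap ordl) (hrs : RightStable @Fmap ordr)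
    (hpb : RelLiftPullback @Fmap) : StablePair @Fmap ordl ordr := by
  rintro X Y Z W f g R u v ⟨_, _, hua, hab, hbv⟩
  obtain ⟨u', rfl, huu'⟩ := hls _ _ _ _ _ hua
  obtain ⟨v', rfl, hv'v⟩ := hrs _ _ _ _ _ hbv
  exact ⟨u', v', huu', hpb _ _ _ _ _ _ _ _ _ hab, hv'v⟩

theorem right_comp_left_stable_general
    [∀ X, IsPreorder (F X) (ordr X)] [∀ X, IsPreorder (F X) (ordl X)]
    (hmonor : FunctorialOrder @Fmap ordr) (hmonol : FunctorialOrder @Fmap ordl)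
    (hrs : RightStable @Fmap ordr) (hls : LeftStable @Fmap ordl)
    (hcomm : ∀ X, Relation.Comp (ordr X) (ordl X) ≤ Relation.Comp (ordl X) (ordr X))
    (hpb : RelLiftPullback @Fmap) :
    StablePair @Fmap (fun X => Relation.Comp (ordl X) (ordr X))
      (fun X => Relation.Comp (ordl X) (ordr X)) := by
  intro X Y Z W f g R u v h
  have hreduced : orderedRelLift @Fmap ordl ordr R (Fmap f u) (Fmap g v) :=
    orderedRelLift_comp_le hmonor hmonol hrs hls hcomm R _ _ h
  have hpullback : orderedRelLift @Fmap ordl ordr (fun x y => R (f x) (g y)) u v :=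
    hls.stablePair hrs hpb _ _ _ _ f g R u v hreduced
  exact orderedRelLift_mono (fun X _ b hab => ⟨b, hab, refl_of (ordr X) b⟩)
    (fun X a _ hab => ⟨a, refl_of (ordl X) a, hab⟩) _ _ _ hpullback

end

theorem right_comp_left_stable
    (F : Type → Type) (Fmap : ∀ {X Y : Type}, (X → Y) → F X → F Y)
    (ordr ordl : ∀ X : Type, F X → F X → Prop)
    -- ⊑^r and ⊑^l are functorial preorders on F
    (hreflr : ∀ (X : Type) (u : F X), ordr X u u)
    (htransr : ∀ (X : Type) (u v w : F X), ordr X u v → ordr X v w → ordr X u w)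
    (hmonor : ∀ (X Y : Type) (f : X → Y) (u v : F X),
        ordr X u v → ordr Y (Fmap f u) (Fmap f v))
    (hrefll : ∀ (X : Type) (u : F X), ordl X u u)
    (htransl : ∀ (X : Type) (u v w : F X), ordl X u v → ordl X v w → ordl X u w)
    (hmonol : ∀ (X Y : Type) (f : X → Y) (u v : F X),
        ordl X u v → ordl Y (Fmap f u) (Fmap f v))
    -- ⊑^r is right-stable
    (hrs : ∀ (X Y : Type) (f : X → Y) (u : F Y) (v : F X),
        ordr Y u (Fmap f v) → ∃ w : F X, Fmap f w = u ∧ ordr X w v)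
    -- ⊑^l is left-stable
    (hls : ∀ (X Y : Type) (f : X → Y) (u : F X) (v : F Y),
        ordl Y (Fmap f u) v → ∃ w : F X, Fmap f w = v ∧ ordl X u w)
    -- ⊑^r and ⊑^l commute
    (hcomm : ∀ (X : Type) (u v : F X),
        (∃ w, ordl X u w ∧ ordr X w v) ↔ (∃ w, ordr X u w ∧ ordl X w v))
    -- the relation lifting commutes with inverse images (weak-pullback preservation)
    (hpb : ∀ (X Y Z W : Type) (f : X → Z) (g : Y → W) (R : Z → W → Prop)
        (u : F X) (v : F Y),
        relLift F @Fmap (fun x y => R (f x) (g y)) u v ↔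
          relLift F @Fmap R (Fmap f u) (Fmap g v)) :
    -- then ⊑ = ⊑^r ∘ ⊑^l is stable:
    -- (Ff × Fg)⁻¹(Rel_⊑(F)(R)) ⊆ Rel_⊑(F)((f × g)⁻¹(R))
    ∀ (X Y Z W : Type) (f : X → Z) (g : Y → W) (R : Z → W → Prop)
      (u : F X) (v : F Y),
      (∃ (a : F Z) (b : F W),
          (∃ w, ordl Z (Fmap f u) w ∧ ordr Z w a) ∧
          relLift F @Fmap R a b ∧
          (∃ w, ordl W b w ∧ ordr W w (Fmap g v))) →
        ∃ (a : F X) (b : F Y),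
          (∃ w, ordl X u w ∧ ordr X w a) ∧
          relLift F @Fmap (fun x y => R (f x) (g y)) a b ∧
          (∃ w, ordl Y b w ∧ ordr Y w v) := by
  have (X : Type) : IsPreorder (F X) (ordr X) := { refl := hreflr X, trans := htransr X }
  have (X : Type) : IsPreorder (F X) (ordl X) := { refl := hrefll X, trans := htransl X }
  exact right_comp_left_stable_general hmonor hmonol hrs hls
    (fun X u v => (hcomm X u v).mpr) (fun X Y Z W f g R u v => (hpb X Y Z W f g R u v).mpr)
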